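/- Let n ≥ 2, let Ω ⊂ ℝⁿ be an open bounded set, let α ∈ [0, n], and let G ∈ L¹(Ω) be nonnegative (extended by zero outside Ω). Let ξ ∈ Ω, ρ > 0 and λ > 0, and suppose there exists z₁ ∈ B_ρ(ξ) ∩ Ω with M_α G(z₁) ≤ λ. Then for every σ > 3ⁿ, d_G^α(B_ρ(ξ) ∩ Ω; σλ) ≤ d_{χ·G}^α(B_ρ(ξ) ∩ Ω; σλ), where χ·G denotes G multiplied by the indicator function of B_{2ρ}(ξ). -/

import Mathlib

open MeasureTheory Metric Set Filter
open scoped ENNReal NNReal Topology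

noncomputable section

/-- Euclidean space `ℝⁿ`. -/
abbrev En (n : ℕ) := EuclideanSpace ℝ (Fin n)

/-- The fractional maximal function
`M_α f (x) = sup_{ρ>0} ρ^α ⨍_{B_ρ(x)} |f|`, with values in `ℝ≥0∞`. -/
noncomputable def fracMax {n : ℕ} (α : ℝ) (f : En n → ℝ) (x : En n) : ℝ≥0∞ :=
  ⨆ (ρ : ℝ) (_ : 0 < ρ),
    ENNReal.ofReal (ρ ^ α) *
      ((∫⁻ y in ball x ρ, ENNReal.ofReal |f y|) / volume (ball x ρ))

/-- Cutoff fractional maximal function `T_α^r f` (supremum over radii `ρ ≥ r`). -/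
noncomputable def fracMaxGe {n : ℕ} (α r : ℝ) (f : En n → ℝ) (x : En n) : ℝ≥0∞ :=
  ⨆ (ρ : ℝ) (_ : r ≤ ρ),
    ENNReal.ofReal (ρ ^ α) *
      ((∫⁻ y in ball x ρ, ENNReal.ofReal |f y|) / volume (ball x ρ))

/-- Fractional-maximal distribution function `d_G^α(E; λ) = |{x ∈ E : M_α G x > λ}|`. -/
noncomputable def fmd {n : ℕ} (α : ℝ) (G : En n → ℝ) (E : Set (En n)) (lam : ℝ) : ℝ≥0∞ :=
  volume {x ∈ E | ENNReal.ofReal lam < fracMax α G x}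

/-- Quasi-triangle class `Q(B)` with constant `ctil`. -/
def QuasiTriangle {n : ℕ} (ctil : ℝ) (G φ ψ : En n → ℝ) (B : Set (En n)) : Prop :=
  ∀ᵐ x ∂(volume.restrict B),
    G x ≤ ctil * (φ x + ψ x) ∧ φ x ≤ ctil * (G x + ψ x) ∧ ψ x ≤ ctil * (G x + φ x)

/-- Reverse Hölder class `RH^γ(Ω_r(ν))` with constant `C₀`. -/
def RevHolder {n : ℕ} (γ C₀ : ℝ) (Ω : Set (En n)) (φ : En n → ℝ) (ν : En n) (r : ℝ) : Prop :=
  (⨍ x in ball ν r ∩ Ω, φ x ^ γ) ^ (1 / γ) ≤ C₀ * ⨍ x in ball ν (2 * r) ∩ Ω, φ x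

/-- Local comparison (A2₁). -/
def LocalComp₁ {n : ℕ} (Ω : Set (En n)) (F G : En n → ℝ) (r₀ γ ctil C₀ : ℝ)
    (c : ℝ → ℝ) : Prop :=
  ∀ ν ∈ closure Ω, ∀ r : ℝ, 0 < r → r ≤ r₀ / 2 →
    ∃ φ ψ : En n → ℝ, Measurable φ ∧ Measurable ψ ∧
      (∀ x ∉ ball ν (2 * r) ∩ Ω, φ x = 0) ∧ (∀ x ∉ ball ν (2 * r) ∩ Ω, ψ x = 0) ∧
      QuasiTriangle ctil G φ ψ (ball ν (2 * r)) ∧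
      RevHolder γ C₀ Ω φ ν r ∧
      ∀ ε ∈ Ioo (0 : ℝ) 1,
        ⨍ x in ball ν r, ψ x
          ≤ ε * ⨍ x in ball ν (2 * r), G x + c ε * ⨍ x in ball ν (2 * r), F x

/-- Local comparison (A2₂). -/
def LocalComp₂ {n : ℕ} (Ω : Set (En n)) (F G : En n → ℝ) (r₀ ctil chat : ℝ)
    (c : ℝ → ℝ) : Prop :=
  ∀ ν ∈ closure Ω, ∀ r : ℝ, 0 < r → r ≤ r₀ / 2 →
    ∃ φ ψ : En n → ℝ, Measurable φ ∧ Measurable ψ ∧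
      (∀ x ∉ ball ν r ∩ Ω, φ x = 0) ∧ (∀ x ∉ ball ν r ∩ Ω, ψ x = 0) ∧
      QuasiTriangle ctil G φ ψ (ball ν r) ∧
      (∀ ε ∈ Ioo (0 : ℝ) 1,
        ⨍ x in ball ν r, ψ x
          ≤ ε * ⨍ x in ball ν (2 * r), G x + c ε * ⨍ x in ball ν (2 * r), F x) ∧
      ∀ᵐ x ∂(volume.restrict (ball ν r)), φ x ≤ chat * ⨍ y in ball ν (2 * r), (G y + F y)

/-- Lorentz quasi-norm `‖f‖_{L^{q,s}(Ω)}` for an `ℝ≥0∞`-valued function, `0 < s ≤ ∞`. -/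
noncomputable def lorentzNorm {n : ℕ} (q : ℝ) (s : ℝ≥0∞) (Ω : Set (En n))
    (f : En n → ℝ≥0∞) : ℝ≥0∞ :=
  if s = ∞ then
    ⨆ (lam : ℝ) (_ : 0 < lam),
      ENNReal.ofReal lam * (volume {x ∈ Ω | ENNReal.ofReal lam < f x}) ^ (1 / q)
  else
    (ENNReal.ofReal q *
      ∫⁻ lam in Ioi (0 : ℝ),
        ((ENNReal.ofReal lam) ^ q * volume {x ∈ Ω | ENNReal.ofReal lam < f x}) ^ (s.toReal / q)
          * ENNReal.ofReal lam⁻¹) ^ (1 / s.toReal)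

/-- Extension of a Young function to `ℝ≥0∞`. -/
noncomputable def PhiE (Φ : ℝ → ℝ) (t : ℝ≥0∞) : ℝ≥0∞ :=
  if t = ∞ then ∞ else ENNReal.ofReal (Φ t.toReal)

/-- Luxemburg norm of an `ℝ≥0∞`-valued function on `Ω`. -/
noncomputable def luxNorm {n : ℕ} (Φ : ℝ → ℝ) (Ω : Set (En n)) (f : En n → ℝ≥0∞) : ℝ≥0∞ :=
  sInf {τ : ℝ≥0∞ | 0 < τ ∧ ∫⁻ x in Ω, PhiE Φ (f x / τ) ≤ 1}

/-- Luxemburg norm of a real-valued function on `Ω`. -/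
noncomputable def luxNormR {n : ℕ} (Φ : ℝ → ℝ) (Ω : Set (En n)) (f : En n → ℝ) : ℝ≥0∞ :=
  luxNorm Φ Ω fun x => ENNReal.ofReal |f x|

/-- Orlicz–Lorentz norm `‖f‖_{L^Φ(q,s)(Ω)}` of an `ℝ≥0∞`-valued function. -/
noncomputable def orliczLorentzNorm {n : ℕ} (Φ : ℝ → ℝ) (q : ℝ) (s : ℝ≥0∞)
    (Ω : Set (En n)) (f : En n → ℝ≥0∞) : ℝ≥0∞ :=
  sInf {τ : ℝ≥0∞ | 0 < τ ∧ lorentzNorm q s Ω (fun x => PhiE Φ (f x / τ)) ≤ 1}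

/-- `Φ` is a Young function: nonnegative, increasing, convex, `Φ 0 = 0`, with
`Φ(μ)/μ → 0` as `μ → 0⁺` and `Φ(μ)/μ → ∞` as `μ → ∞`. -/
def IsYoung (Φ : ℝ → ℝ) : Prop :=
  (∀ μ ≥ (0 : ℝ), 0 ≤ Φ μ) ∧ MonotoneOn Φ (Ici 0) ∧ ConvexOn ℝ (Ici 0) Φ ∧ Φ 0 = 0 ∧
    Tendsto (fun μ => Φ μ / μ) (𝓝[>] 0) (𝓝 0) ∧
    Tendsto (fun μ => Φ μ / μ) atTop atTop

/-- The `Δ₂` condition. -/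
def Delta2 (Φ : ℝ → ℝ) : Prop :=
  ∃ τ ≥ (2 : ℝ), ∀ μ ≥ (0 : ℝ), Φ (2 * μ) ≤ τ * Φ μ

/-- The `∇₂` condition. -/
def Nabla2 (Φ : ℝ → ℝ) : Prop :=
  ∃ τ > (1 : ℝ), ∀ μ ≥ (0 : ℝ), Φ μ ≤ Φ (τ * μ) / (2 * τ)

/-- The quantity `Ψ_ς(ξ₁, ξ₂) = (ς² + |ξ₁|² + |ξ₂|²)^{(p-2)/2} |ξ₁ - ξ₂|²`. -/
noncomputable def PsiV {n : ℕ} (p ς : ℝ) (ξ₁ ξ₂ : En n) : ℝ :=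
  (ς ^ 2 + ‖ξ₁‖ ^ 2 + ‖ξ₂‖ ^ 2) ^ ((p - 2) / 2) * ‖ξ₁ - ξ₂‖ ^ 2

end

/-!
A ball about a point of `B_ρ(ξ)` with radius `r ≤ ρ` lies in `B_{2ρ}(ξ)`, so it does not see the
cutoff. If `r > ρ`, the ball lies in `B_{3r}(z)` for every `z ∈ B_ρ(ξ)`; passing to the larger ball
costs `3ⁿ` in the volume and gains `3^α` in the weight `r^α`. Hence on `B_ρ(ξ)`
`M_α f(x) ≤ max (M_α(χ f)(x)) (3^(n-α) M_α f(z))`, and above the level `3^(n-α) M_α f(z)` only the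
first entry matters.
-/

theorem setLAverage_ball_le_of_subset {E : Type*} [NormedAddCommGroup E] [NormedSpace ℝ E]
    [FiniteDimensional ℝ E] [MeasurableSpace E] [BorelSpace E] (μ : Measure E)
    [μ.IsAddHaarMeasure] (f : E → ℝ≥0∞) {x z : E} {c r : ℝ} (hc : 0 < c)
    (hsub : ball x r ⊆ ball z (c * r)) :
    ⨍⁻ y in ball x r, f y ∂μ ≤
      ENNReal.ofReal (c ^ Module.finrank ℝ E) * ⨍⁻ y in ball z (c * r), f y ∂μ := by
  have hscale : ENNReal.ofReal (c ^ Module.finrank ℝ E) ≠ 0 :=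
    (ENNReal.ofReal_pos.2 (by positivity)).ne'
  rw [setLAverage_eq, setLAverage_eq, Measure.addHaar_ball_mul_of_pos μ z hc,
    ← Measure.addHaar_ball_center μ x, ← mul_div_assoc,
    ENNReal.mul_div_mul_left _ _ hscale ENNReal.ofReal_ne_top]
  gcongr

section FractionalMaximal

variable {n : ℕ} (α : ℝ) (f : En n → ℝ) {x z ξ : En n} {r ρ : ℝ}

theorem fracMax_eq_iSup_setLAverage (x : En n) :
    fracMax α f x = ⨆ (r : ℝ) (_ : 0 < r),
      ENNReal.ofReal (r ^ α) * ⨍⁻ y in ball x r, ENNReal.ofReal |f y| ∂volume := by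
  simp only [fracMax, setLAverage_eq]

theorem rpow_mul_setLAverage_le_fracMax (x : En n) (hr : 0 < r) :
    ENNReal.ofReal (r ^ α) * ⨍⁻ y in ball x r, ENNReal.ofReal |f y| ∂volume ≤ fracMax α f x := by
  rw [fracMax_eq_iSup_setLAverage]
  exact le_iSup₂_of_le r hr le_rfl

theorem rpow_mul_setLAverage_le_fracMax_indicator {s : Set (En n)} (hr : 0 < r)
    (hsub : ball x r ⊆ s) :
    ENNReal.ofReal (r ^ α) * ⨍⁻ y in ball x r, ENNReal.ofReal |f y| ∂volume ≤
      fracMax α (s.indicator f) x := by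
  have hcongr : ⨍⁻ y in ball x r, ENNReal.ofReal |f y| ∂volume =
      ⨍⁻ y in ball x r, ENNReal.ofReal |s.indicator f y| ∂volume :=
    setLAverage_congr_fun measurableSet_ball fun y hy ↦ by
      simp only [indicator_of_mem (hsub hy)]
  rw [hcongr]
  exact rpow_mul_setLAverage_le_fracMax α _ x hr

theorem rpow_mul_setLAverage_le_mul_fracMax {c : ℝ} (hc : 0 < c) (hr : 0 < r)
    (hsub : ball x r ⊆ ball z (c * r)) :
    ENNReal.ofReal (r ^ α) * ⨍⁻ y in ball x r, ENNReal.ofReal |f y| ∂volume ≤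
      ENNReal.ofReal (c ^ (n - α)) * fracMax α f z := by
  have hweight : r ^ α * c ^ n = c ^ (n - α) * (c * r) ^ α := by
    rw [Real.mul_rpow hc.le hr.le, Real.rpow_sub hc, Real.rpow_natCast]
    field_simp
  calc ENNReal.ofReal (r ^ α) * ⨍⁻ y in ball x r, ENNReal.ofReal |f y| ∂volume
      ≤ ENNReal.ofReal (r ^ α) *
          (ENNReal.ofReal (c ^ n) * ⨍⁻ y in ball z (c * r), ENNReal.ofReal |f y| ∂volume) := by
        gcongr
        simpa only [finrank_euclideanSpace_fin] using
          setLAverage_ball_le_of_subset volume (fun y ↦ ENNReal.ofReal |f y|) hc hsub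
    _ = ENNReal.ofReal (c ^ (n - α)) *
          (ENNReal.ofReal ((c * r) ^ α) *
            ⨍⁻ y in ball z (c * r), ENNReal.ofReal |f y| ∂volume) := by
        rw [← mul_assoc, ← ENNReal.ofReal_mul (by positivity), hweight,
          ENNReal.ofReal_mul (by positivity), mul_assoc]
    _ ≤ ENNReal.ofReal (c ^ (n - α)) * fracMax α f z := by
        gcongr
        exact rpow_mul_setLAverage_le_fracMax α f z (mul_pos hc hr)

theorem fracMax_le_max_fracMax_indicator (hx : x ∈ ball ξ ρ) (hz : z ∈ ball ξ ρ) :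
    fracMax α f x ≤ max (fracMax α ((ball ξ (2 * ρ)).indicator f) x)
      (ENNReal.ofReal (3 ^ (n - α)) * fracMax α f z) := by
  rw [mem_ball] at hx hz
  rw [fracMax_eq_iSup_setLAverage α f x]
  refine iSup₂_le fun r hr ↦ ?_
  obtain hrρ | hρr := le_or_gt r ρ
  · have hsub : ball x r ⊆ ball ξ (2 * ρ) := ball_subset_ball' (by linarith)
    exact le_max_of_le_left (rpow_mul_setLAverage_le_fracMax_indicator α f hr hsub)
  · have hsub : ball x r ⊆ ball z (3 * r) :=
      ball_subset_ball' (by linarith [dist_triangle_right x z ξ])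
    exact le_max_of_le_right (rpow_mul_setLAverage_le_mul_fracMax α f three_pos hr hsub)

end FractionalMaximal

theorem stmt_12_general {n : ℕ} {α : ℝ} {G : En n → ℝ} {E : Set (En n)} {ξ z : En n}
    {ρ lam σ : ℝ} (hE : E ⊆ ball ξ ρ) (hz : z ∈ ball ξ ρ) (hlam : 0 ≤ lam)
    (hGz : fracMax α G z ≤ ENNReal.ofReal lam) (hσ : (3 : ℝ) ^ (n - α) ≤ σ) :
    fmd α G E (σ * lam) ≤ fmd α ((ball ξ (2 * ρ)).indicator G) E (σ * lam) := by
  have hlarge : ENNReal.ofReal (3 ^ (n - α)) * fracMax α G z ≤ ENNReal.ofReal (σ * lam) := by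
    rw [ENNReal.ofReal_mul' hlam]
    gcongr
  refine measure_mono fun x ⟨hxE, hx⟩ ↦ ⟨hxE, ?_⟩
  have hmax := hx.trans_le (fracMax_le_max_fracMax_indicator α G (hE hxE) hz)
  exact (lt_max_iff.1 hmax).resolve_right hlarge.not_gt

/-- Lemma 3.3: localization of the fractional-maximal distribution function. -/
theorem stmt_12 (n : ℕ) (hn : 2 ≤ n) (Ω : Set (En n)) (hΩo : IsOpen Ω)
    (hΩb : Bornology.IsBounded Ω)
    (α : ℝ) (hα0 : 0 ≤ α) (hα : α ≤ n)
    (G : En n → ℝ) (hGi : IntegrableOn G Ω) (hGnn : ∀ x, 0 ≤ G x)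
    (hGz : ∀ x ∉ Ω, G x = 0)
    (ξ : En n) (hξ : ξ ∈ Ω) (ρ lam : ℝ) (hρ : 0 < ρ) (hlam : 0 < lam)
    (hz : ∃ z₁ ∈ ball ξ ρ ∩ Ω, fracMax α G z₁ ≤ ENNReal.ofReal lam) :
    ∀ σ : ℝ, (3 : ℝ) ^ n < σ →
      fmd α G (ball ξ ρ ∩ Ω) (σ * lam)
        ≤ fmd α ((ball ξ (2 * ρ)).indicator G) (ball ξ ρ ∩ Ω) (σ * lam) := by
  intro σ hσ
  obtain ⟨z, ⟨hzξ, -⟩, hGz⟩ := hz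
  have hpow : (3 : ℝ) ^ (n - α) ≤ 3 ^ n := by
    rw [← Real.rpow_natCast]
    exact Real.rpow_le_rpow_of_exponent_le (by norm_num) (sub_le_self _ hα0)
  exact stmt_12_general inter_subset_left hzξ hlam.le hGz (hpow.trans hσ.le)
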